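/- arXiv:2411.19152 — 3 statements merged into one kernel-verified Lean document; each statement's English description precedes it below -/
import Mathlib

section
/- Let w ∈ ℝ with 0 < |w| ≤ π/2. Then the family (c_n(w))_{n ∈ ℤ} is absolutely summable, i.e. ∑_{n ∈ ℤ} |c_n(w)| < ∞, and for every x ∈ [0,1] one has ∑_{n ∈ ℤ} c_n(w)·e^{i n π x} = e^{i w x}. -/
open Complex

/-- The Fourier coefficients `c_n(w) = −i·w·((−1)ⁿ e^{iw} − 1)/(w² − (nπ)²)` of the 2-periodic
function equal to `e^{iwx}` on `[0,1]` and to `e^{iw(2−x)}` on `(1,2)`. -/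
noncomputable def cc (w : ℝ) (n : ℤ) : ℂ :=
  -I * (w : ℂ) * ((-1 : ℂ) ^ n * Complex.exp (I * (w : ℂ)) - 1)
    / ((w : ℂ) ^ 2 - ((n : ℂ) * (Real.pi : ℂ)) ^ 2)

/-!
The numbers `c_n(w)` are the Fourier coefficients, for period `2`, of the even function
`x ↦ e^{iw|x|}` on `[-1, 1]`. By evenness they equal `∫₀¹ cos(nπx) e^{iwx} dx`, and splitting the
cosine into the exponentials of frequencies `±nπ` leaves two elementary integrals. The function is
continuous on `[-1, 1]` and takes equal values at `±1`, and `c_n(w) = O(n⁻²)`, so its Fourier series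
converges to it at every point.
-/

open MeasureTheory

section FourierSeries

theorem liftIoc_coe_of_mem_Icc {𝕜 α : Type*} [AddCommGroup 𝕜] [LinearOrder 𝕜]
    [IsOrderedAddMonoid 𝕜] [Archimedean 𝕜] {p a x : 𝕜} [hp : Fact (0 < p)] {f : 𝕜 → α}
    (hf : f a = f (a + p)) (hx : x ∈ Set.Icc a (a + p)) :
    AddCircle.liftIoc p a f (x : AddCircle p) = f x := by
  rcases hx.1.eq_or_lt with rfl | hax
  · rw [AddCircle.liftIoc_eq_liftIco hf,
      AddCircle.liftIco_coe_apply ⟨le_rfl, lt_add_of_pos_right a hp.out⟩]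
  · exact AddCircle.liftIoc_coe_apply ⟨hax, hx.2⟩

theorem hasSum_fourierCoeffOn_of_summable {a b : ℝ} (hab : a < b) {f : ℝ → ℂ}
    (hf : ContinuousOn f (Set.Icc a b)) (hfab : f a = f b)
    (hsum : Summable (fourierCoeffOn hab f)) {x : ℝ} (hx : x ∈ Set.Icc a b) :
    HasSum (fun n : ℤ => fourierCoeffOn hab f n • fourier n (x : AddCircle (b - a))) (f x) := by
  have : Fact (0 < b - a) := ⟨sub_pos.mpr hab⟩
  have hperiod : a + (b - a) = b := add_sub_cancel a b
  have hcont : Continuous (AddCircle.liftIoc (b - a) a f) :=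
    AddCircle.liftIoc_continuous (by rwa [hperiod]) (by rwa [hperiod])
  have hlift : AddCircle.liftIoc (b - a) a f (x : AddCircle (b - a)) = f x :=
    liftIoc_coe_of_mem_Icc (by rwa [hperiod]) (by rwa [hperiod])
  rw [← hlift]
  exact has_pointwise_sum_fourier_series_of_summable (f := ⟨_, hcont⟩) hsum _

variable {E : Type*} [NormedAddCommGroup E]

theorem intervalIntegrable_comp_abs {f : ℝ → E} {T : ℝ} (hT : 0 ≤ T)
    (hf : IntervalIntegrable f volume 0 T) :
    IntervalIntegrable (fun x => f |x|) volume (-T) T := by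
  have hpos : IntervalIntegrable (fun x => f |x|) volume 0 T := by
    refine hf.congr fun x hx => ?_
    rw [Set.uIoc_of_le hT] at hx
    rw [abs_of_pos hx.1]
  have hneg : IntervalIntegrable (fun x => f |x|) volume (-T) 0 := by
    rw [IntervalIntegrable.iff_comp_neg]
    simpa using hpos.symm
  exact hneg.trans hpos

theorem integral_neg_self_eq_integral_add_comp_neg [NormedSpace ℝ E] {f : ℝ → E} {T : ℝ}
    (hf : IntervalIntegrable f volume (-T) T) :
    ∫ x in -T..T, f x = ∫ x in 0..T, (f x + f (-x)) := by
  have hzero : (0 : ℝ) ∈ Set.uIcc (-T) T := by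
    rcases le_total 0 T with hT | hT
    · exact Set.mem_uIcc_of_le (neg_nonpos.mpr hT) hT
    · exact Set.mem_uIcc_of_ge hT (neg_nonneg.mpr hT)
  have hneg : IntervalIntegrable f volume (-T) 0 :=
    hf.mono_set (Set.uIcc_subset_uIcc Set.left_mem_uIcc hzero)
  have hpos : IntervalIntegrable f volume 0 T :=
    hf.mono_set (Set.uIcc_subset_uIcc hzero Set.right_mem_uIcc)
  have hreflect : IntervalIntegrable (fun x => f (-x)) volume 0 T := by
    rw [IntervalIntegrable.iff_comp_neg]
    simpa using hneg.symm
  rw [intervalIntegral.integral_add hpos hreflect, intervalIntegral.integral_comp_neg, neg_zero,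
    add_comm, intervalIntegral.integral_add_adjacent_intervals hneg hpos]

theorem fourier_coe_add_fourier_coe_neg (T : ℝ) (n : ℤ) (x : ℝ) :
    fourier n (x : AddCircle T) + fourier n ((-x : ℝ) : AddCircle T)
      = 2 * cos (2 * Real.pi * n * x / T) := by
  rw [fourier_coe_apply, fourier_coe_apply, two_cos]
  congr 2
  all_goals push_cast; ring

theorem fourierCoeffOn_comp_abs [NormedSpace ℂ E] {f : ℝ → E} {T : ℝ} (hT : 0 < T)
    (hf : IntervalIntegrable f volume 0 T) (n : ℤ) :
    fourierCoeffOn (neg_lt_self hT) (fun x => f |x|) n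
      = T⁻¹ • ∫ x in 0..T, cos (n * Real.pi * x / T) • f x := by
  have hcont : Continuous fun x : ℝ => fourier (-n) (x : AddCircle (T - -T)) := by fun_prop
  have hfold : ∀ x ∈ Set.uIcc 0 T,
      fourier (-n) (x : AddCircle (T - -T)) • f |x|
          + fourier (-n) ((-x : ℝ) : AddCircle (T - -T)) • f |-x|
        = (2 : ℝ) • cos (n * Real.pi * x / T) • f x := by
    intro x hx
    rw [Set.uIcc_of_le hT.le] at hx
    have hfreq : (2 * Real.pi * (-n : ℤ) * x / (T - -T : ℝ) : ℂ) = -(n * Real.pi * x / T) := by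
      push_cast
      field_simp
      ring
    rw [abs_neg, abs_of_nonneg hx.1, ← add_smul, fourier_coe_add_fourier_coe_neg, hfreq, cos_neg,
      mul_smul, ← Complex.coe_smul]
    norm_num
  rw [fourierCoeffOn_eq_integral, integral_neg_self_eq_integral_add_comp_neg
      ((intervalIntegrable_comp_abs hT.le hf).continuousOn_smul hcont.continuousOn),
    intervalIntegral.integral_congr hfold, intervalIntegral.integral_smul, smul_smul]
  congr 1
  field_simp
  ring

end FourierSeries

theorem integral_cos_mul_exp {a w : ℂ} (h : w ^ 2 ≠ a ^ 2) (T : ℝ) :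
    ∫ x in 0..T, cos (a * x) * exp (I * w * x)
      = ((exp (I * (w + a) * T) - 1) / (I * (w + a))
          + (exp (I * (w - a) * T) - 1) / (I * (w - a))) / 2 := by
  have hadd : I * (w + a) ≠ 0 :=
    mul_ne_zero I_ne_zero fun h0 => h (by linear_combination (w - a) * h0)
  have hsub : I * (w - a) ≠ 0 :=
    mul_ne_zero I_ne_zero fun h0 => h (by linear_combination (w + a) * h0)
  have hsplit : ∀ x : ℝ, cos (a * x) * exp (I * w * x)
      = (exp (I * (w + a) * x) + exp (I * (w - a) * x)) / 2 := by
    intro x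
    rw [cos, div_mul_eq_mul_div, add_mul, ← exp_add, ← exp_add]
    ring_nf
  have hint (z : ℂ) : IntervalIntegrable (fun x : ℝ => exp (z * x)) volume 0 T :=
    Continuous.intervalIntegrable (by fun_prop) _ _
  simp_rw [hsplit]
  rw [intervalIntegral.integral_div, intervalIntegral.integral_add (hint _) (hint _),
    integral_exp_mul_complex hadd, integral_exp_mul_complex hsub]
  simp only [ofReal_zero, mul_zero, exp_zero]

theorem exp_I_mul_add_int_mul_pi (z : ℂ) (n : ℤ) :
    exp (I * (z + n * Real.pi)) = (-1) ^ n * exp (I * z) := by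
  rw [show I * (z + n * Real.pi) = I * z + n * (Real.pi * I) by ring,
    exp_antiperiodic.add_int_mul_eq, Int.cast_negOnePow]

theorem exp_I_mul_sub_int_mul_pi (z : ℂ) (n : ℤ) :
    exp (I * (z - n * Real.pi)) = (-1) ^ n * exp (I * z) := by
  rw [show I * (z - n * Real.pi) = I * z - n * (Real.pi * I) by ring,
    exp_antiperiodic.sub_int_mul_eq, Int.cast_negOnePow]

/-- The coefficient `c_n(w)` for a complex frequency `w`: the `n`-th Fourier coefficient of
`x ↦ e^{iw|x|}` on `[-1, 1]`, except at `w = ±nπ`, where division by zero makes it `0`. -/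
noncomputable def complexCC (w : ℂ) (n : ℤ) : ℂ :=
  -I * w * ((-1) ^ n * exp (I * w) - 1) / (w ^ 2 - (n * Real.pi) ^ 2)

theorem cc_eq_complexCC (w : ℝ) : cc w = complexCC w := rfl

theorem fourierCoeffOn_exp_abs {w : ℂ} {n : ℤ} (h : w ^ 2 ≠ (n * Real.pi) ^ 2) :
    fourierCoeffOn (neg_lt_self one_pos) (fun x : ℝ => exp (I * w * (|x| : ℝ))) n
      = complexCC w n := by
  have hint : IntervalIntegrable (fun x : ℝ => exp (I * w * x)) volume 0 1 :=
    Continuous.intervalIntegrable (by fun_prop) _ _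
  have hden : w ^ 2 - (n * Real.pi) ^ 2 ≠ 0 := sub_ne_zero.mpr h
  have hfactor : w ^ 2 - (n * Real.pi) ^ 2 = (w + n * Real.pi) * (w - n * Real.pi) := by ring
  obtain ⟨hadd, hsub⟩ := mul_ne_zero_iff.mp (hfactor ▸ hden)
  rw [fourierCoeffOn_comp_abs (f := fun x : ℝ => exp (I * w * x)) one_pos hint n]
  simp only [inv_one, one_smul, ofReal_one, div_one, smul_eq_mul]
  rw [integral_cos_mul_exp h, complexCC, hfactor]
  simp only [ofReal_one, mul_one, exp_I_mul_add_int_mul_pi, exp_I_mul_sub_int_mul_pi]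
  field_simp
  rw [I_sq]
  ring

theorem norm_neg_one_zpow_mul_sub_one_le (n : ℤ) (z : ℂ) :
    ‖(-1) ^ n * z - 1‖ ≤ ‖z‖ + 1 := by
  simpa using norm_sub_le ((-1) ^ n * z) 1

theorem summable_inv_sq_sub_int_mul_pi_sq (w : ℂ) :
    Summable fun n : ℤ => (w ^ 2 - (n * Real.pi) ^ 2 : ℂ)⁻¹ := by
  have hpi : (Real.pi : ℂ) ≠ 0 := ofReal_ne_zero.mpr Real.pi_ne_zero
  have h := EisensteinSeries.summable_linear_sub_mul_linear_add (w / Real.pi) 1 1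
  refine (h.mul_left ((Real.pi : ℂ) ^ 2)⁻¹).congr fun n => ?_
  rw [← mul_inv]
  congr 1
  push_cast
  field_simp
  ring

theorem summable_norm_complexCC (w : ℂ) : Summable fun n : ℤ => ‖complexCC w n‖ := by
  refine ((summable_inv_sq_sub_int_mul_pi_sq w).norm.mul_left
    (‖w‖ * (‖exp (I * w)‖ + 1))).of_nonneg_of_le (fun n => norm_nonneg _) fun n => ?_
  rw [complexCC, div_eq_mul_inv, norm_mul, norm_mul, norm_mul, norm_neg, norm_I, one_mul]
  gcongr
  exact norm_neg_one_zpow_mul_sub_one_le n _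

theorem sq_ne_int_mul_pi_sq {w : ℝ} (hw0 : 0 < |w|) (hw : |w| < Real.pi) (n : ℤ) :
    w ^ 2 ≠ (n * Real.pi) ^ 2 := by
  rw [Ne, sq_eq_sq_iff_abs_eq_abs, abs_mul, abs_of_pos Real.pi_pos]
  intro h
  rcases eq_or_ne n 0 with rfl | hn
  · simp [h] at hw0
  · have hone : (1 : ℝ) ≤ |(n : ℝ)| := by exact_mod_cast Int.one_le_abs hn
    exact hw.not_ge (h ▸ le_mul_of_one_le_left Real.pi_pos.le hone)

theorem fourier_series_aw_general (w : ℂ) (hw : ∀ n : ℤ, w ^ 2 ≠ (n * Real.pi) ^ 2) :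
    Summable (fun n : ℤ => ‖complexCC w n‖) ∧
    ∀ x ∈ Set.Icc (-1 : ℝ) 1,
      HasSum (fun n : ℤ => complexCC w n * exp (I * n * Real.pi * x))
        (exp (I * w * (|x| : ℝ))) := by
  have hsum := summable_norm_complexCC w
  refine ⟨hsum, fun x hx => ?_⟩
  have hcoeff : fourierCoeffOn (neg_lt_self one_pos) (fun x : ℝ => exp (I * w * (|x| : ℝ)))
      = complexCC w := funext fun n => fourierCoeffOn_exp_abs (hw n)
  have hseries := hasSum_fourierCoeffOn_of_summable (neg_lt_self one_pos)
    (f := fun x : ℝ => exp (I * w * (|x| : ℝ))) (by fun_prop) (by simp)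
    (hcoeff ▸ hsum.of_norm) hx
  rw [hcoeff] at hseries
  refine hseries.congr_fun fun n => ?_
  rw [fourier_coe_apply, smul_eq_mul]
  congr 2
  push_cast
  ring

/-- For `0 < |w| ≤ π/2`, the Fourier coefficients `c_n(w)` are absolutely summable and the
Fourier series `∑_{n∈ℤ} c_n(w) e^{inπx}` converges to `e^{iwx}` on `[0,1]`. -/
theorem fourier_series_aw (w : ℝ) (hw0 : 0 < |w|) (hw : |w| ≤ Real.pi / 2) :
    Summable (fun n : ℤ => ‖cc w n‖) ∧
    ∀ x ∈ Set.Icc (0:ℝ) 1,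
      ∑' n : ℤ, cc w n * Complex.exp (I * (n : ℂ) * (Real.pi : ℂ) * (x : ℂ))
        = Complex.exp (I * (w : ℂ) * (x : ℂ)) := by
  have hlt : |w| < Real.pi := hw.trans_lt (half_lt_self Real.pi_pos)
  obtain ⟨hsum, hseries⟩ :=
    fourier_series_aw_general w fun n => mod_cast sq_ne_int_mul_pi_sq hw0 hlt n
  rw [cc_eq_complexCC]
  refine ⟨hsum, fun x hx => ?_⟩
  simpa only [abs_of_nonneg hx.1] using
    (hseries x ⟨neg_one_lt_zero.le.trans hx.1, hx.2⟩).tsum_eq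
end

section
/- Let w ∈ ℝ with 0 < |w| ≤ π/2 and let N ≥ 1 be a natural number. Then ∑_{n=1}^{N} n·|c_n(w)| ≤ (2/π)·(4/3 + (1/2)·log((4N² − 1)/3)). -/
/-!
Let `|w| ≤ aπ` with `a < 1`. The numerator of `c_n(w)` has modulus at most `2|w|`, so
`n·|c_n(w)| ≤ (2a/π)·n/(n² − a²)`. By partial fractions
`n/(n² − a²) = (1/2)·(1/(n − a) + 1/(n + a))`, and `1/x ≤ log x − log (x − 1)` bounds each term
with `n ≥ 2` by an increment of `(1/2)·log (n² − a²)`; the increments telescope. The choice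
`a = 1/2` even gives half of the bound claimed.
-/

open Complex

lemma norm_cc_le (w : ℝ) (n : ℤ) : ‖cc w n‖ ≤ 2 * |w| / |w ^ 2 - (n * Real.pi) ^ 2| := by
  have hnum : ‖(-1 : ℂ) ^ n * exp (I * w) - 1‖ ≤ 2 := calc
    _ ≤ ‖(-1 : ℂ) ^ n * exp (I * w)‖ + ‖(1 : ℂ)‖ := norm_sub_le _ _
    _ = 2 := by
      rw [norm_mul, norm_zpow, norm_neg, norm_one, one_zpow, mul_comm I, norm_exp_ofReal_mul_I]
      norm_num
  have hden : ‖(w : ℂ) ^ 2 - (n * Real.pi) ^ 2‖ = |w ^ 2 - (n * Real.pi) ^ 2| := by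
    rw [← Real.norm_eq_abs, ← norm_real]
    push_cast
    rfl
  rw [cc, norm_div, hden, norm_mul, norm_mul, norm_neg, norm_I, one_mul, norm_real,
    Real.norm_eq_abs, mul_comm 2]
  gcongr

lemma norm_cc_le_of_abs_le_mul_pi {w a : ℝ} {n : ℤ} (hw : |w| ≤ a * Real.pi) (han : a < |n|) :
    ‖cc w n‖ ≤ 2 * a / Real.pi / (n ^ 2 - a ^ 2) := by
  have ha : 0 ≤ a := nonneg_of_mul_nonneg_left ((abs_nonneg w).trans hw) Real.pi_pos
  have hpos : 0 < (n : ℝ) ^ 2 - a ^ 2 :=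
    sub_pos.2 (sq_lt_sq.2 (by rwa [abs_of_nonneg ha, ← Int.cast_abs]))
  have hw_sq : w ^ 2 ≤ (a * Real.pi) ^ 2 := sq_le_sq.2 (hw.trans (le_abs_self _))
  have hden : Real.pi ^ 2 * (n ^ 2 - a ^ 2) ≤ |w ^ 2 - (n * Real.pi) ^ 2| := calc
    _ ≤ -(w ^ 2 - (n * Real.pi) ^ 2) := by linarith
    _ ≤ _ := neg_le_abs _
  calc ‖cc w n‖ ≤ 2 * |w| / |w ^ 2 - (n * Real.pi) ^ 2| := norm_cc_le w n
    _ ≤ 2 * (a * Real.pi) / (Real.pi ^ 2 * (n ^ 2 - a ^ 2)) := by gcongr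
    _ = 2 * a / Real.pi / (n ^ 2 - a ^ 2) := by field_simp

lemma inv_le_log_sub_log_sub_one {x : ℝ} (hx : 1 < x) :
    x⁻¹ ≤ Real.log x - Real.log (x - 1) := by
  have hx₀ : 0 < x := one_pos.trans hx
  have hx₁ : 0 < x - 1 := sub_pos.2 hx
  calc x⁻¹ = 1 - (x / (x - 1))⁻¹ := by field_simp; ring
    _ ≤ Real.log (x / (x - 1)) := Real.one_sub_inv_le_log_of_pos (div_pos hx₀ hx₁)
    _ = Real.log x - Real.log (x - 1) := Real.log_div hx₀.ne' hx₁.ne'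

lemma div_sq_sub_sq_le_log_sub_log {a x : ℝ} (hax : |a| < x - 1) :
    x / (x ^ 2 - a ^ 2) ≤
      1 / 2 * (Real.log (x ^ 2 - a ^ 2) - Real.log ((x - 1) ^ 2 - a ^ 2)) := by
  obtain ⟨hneg, hpos⟩ := abs_lt.1 hax
  have hadd : 1 < x + a := by linarith
  have hsub : 1 < x - a := by linarith
  have hpartial : x / (x ^ 2 - a ^ 2) = 1 / 2 * ((x + a)⁻¹ + (x - a)⁻¹) := by
    have hadd₀ : x + a ≠ 0 := by linarith
    have hsub₀ : x - a ≠ 0 := by linarith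
    rw [sq_sub_sq]
    field_simp
    ring
  have hlog : Real.log (x ^ 2 - a ^ 2) = Real.log (x + a) + Real.log (x - a) := by
    rw [sq_sub_sq, Real.log_mul (by linarith) (by linarith)]
  have hlog_pred : Real.log ((x - 1) ^ 2 - a ^ 2) =
      Real.log (x + a - 1) + Real.log (x - a - 1) := by
    rw [sq_sub_sq, Real.log_mul (by linarith) (by linarith), sub_add_eq_add_sub, sub_right_comm]
  rw [hpartial, hlog, hlog_pred]
  linarith [inv_le_log_sub_log_sub_one hadd, inv_le_log_sub_log_sub_one hsub]

lemma sum_div_sq_sub_sq_le {a : ℝ} (ha : |a| < 1) {N : ℕ} (hN : 1 ≤ N) :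
    ∑ n ∈ Finset.Icc 1 N, (n : ℝ) / (n ^ 2 - a ^ 2) ≤
      1 / (1 - a ^ 2) + 1 / 2 * Real.log ((N ^ 2 - a ^ 2) / (1 - a ^ 2)) := by
  have hpos {n : ℕ} (hn : 1 ≤ n) : (0 : ℝ) < n ^ 2 - a ^ 2 :=
    sub_pos.2 (sq_lt_sq.2 (by simpa using ha.trans_le (Nat.one_le_cast.2 hn)))
  have hone : 1 - a ^ 2 ≠ 0 := by simpa using (hpos le_rfl).ne'
  rw [Real.log_div (hpos hN).ne' hone]
  induction N, hN using Nat.le_induction with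
  | base => simp
  | succ n hn ih =>
    have han : |a| < (n + 1 : ℝ) - 1 := by simpa using ha.trans_le (Nat.one_le_cast.2 hn)
    have hstep := div_sq_sub_sq_le_log_sub_log han
    rw [add_sub_cancel_right] at hstep
    rw [Finset.sum_Icc_succ_top (by lia), Nat.cast_add_one]
    linarith

theorem cc_weighted_sum_bound_general {w a : ℝ} (hw : |w| ≤ a * Real.pi) (ha : a < 1)
    {N : ℕ} (hN : 1 ≤ N) :
    ∑ n ∈ Finset.Icc 1 N, (n : ℝ) * ‖cc w (n : ℤ)‖ ≤
      2 * a / Real.pi *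
        (1 / (1 - a ^ 2) + 1 / 2 * Real.log ((N ^ 2 - a ^ 2) / (1 - a ^ 2))) := by
  have ha₀ : 0 ≤ a := nonneg_of_mul_nonneg_left ((abs_nonneg w).trans hw) Real.pi_pos
  calc ∑ n ∈ Finset.Icc 1 N, (n : ℝ) * ‖cc w (n : ℤ)‖
      ≤ ∑ n ∈ Finset.Icc 1 N, 2 * a / Real.pi * (n / (n ^ 2 - a ^ 2)) := by
        refine Finset.sum_le_sum fun n hn ↦ ?_
        have han : a < |(n : ℤ)| := by
          simpa using ha.trans_le (Nat.one_le_cast.2 (Finset.mem_Icc.1 hn).1)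
        rw [mul_div_left_comm]
        gcongr
        exact norm_cc_le_of_abs_le_mul_pi hw han
    _ ≤ _ := by
        rw [← Finset.mul_sum]
        gcongr
        exact sum_div_sq_sub_sq_le (by rwa [abs_of_nonneg ha₀]) hN

/-- Weighted partial-sum bound: for `0 < |w| ≤ π/2` and `N ≥ 1`,
`∑_{n=1}^{N} n·|c_n(w)| ≤ (2/π)·(4/3 + (1/2)·log((4N² − 1)/3))`. -/
theorem cc_weighted_sum_bound (w : ℝ) (hw0 : 0 < |w|) (hw : |w| ≤ Real.pi / 2)
    (N : ℕ) (hN : 1 ≤ N) :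
    ∑ n ∈ Finset.Icc 1 N, (n : ℝ) * ‖cc w (n : ℤ)‖
      ≤ (2 / Real.pi) * (4/3 + (1/2) * Real.log ((4 * (N : ℝ) ^ 2 - 1) / 3)) := by
  have hhalf := cc_weighted_sum_bound_general (w := w) (a := 1 / 2) (by linarith) (by norm_num) hN
  have hnonneg : 0 ≤ ∑ n ∈ Finset.Icc 1 N, (n : ℝ) * ‖cc w (n : ℤ)‖ := by positivity
  have hratio : ((N : ℝ) ^ 2 - (1 / 2) ^ 2) / (1 - (1 / 2) ^ 2) = (4 * N ^ 2 - 1) / 3 := by ring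
  rw [hratio] at hhalf
  linear_combination hnonneg + 2 * hhalf
end

section
/- Let w ∈ ℝ with 0 < |w| ≤ π/2 and let N ≥ 1 be a natural number. Then sup_{x ∈ [0,1]} |P_{N,w}(x) − e^{iwx}| ≤ (2/(N+1))·∑_{n=1}^{N} n·|c_n(w)| + 2·∑_{n=N+1}^{∞} |c_n(w)|. -/
/-!
On the circle `ℝ/2ℤ` the norm of `x` is `|x|` for `|x| ≤ 1`, so `θ ↦ e^{iw‖θ‖}` is a continuous
function that agrees with `e^{iwx}` on `[0,1]`, and its Fourier coefficients are the `cc w n`. They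
decay like `1/n²`, so the Fourier series converges absolutely to this function. For an absolutely
convergent bilateral series `∑ a n`, the Cesàro mean misses the fraction `|n|/(N+1)` of each term
with `|n| ≤ N` and all of each term with `|n| > N`, so the triangle inequality bounds its error;
the terms `n` and `-n` contribute equally because `cc w (-n) = cc w n`.
-/

open Complex

/-- The `N`-th Cesàro mean `P_{N,w}(x) = ∑_{n=−N}^{N} ((N+1−|n|)/(N+1))·c_n(w)·e^{inπx}`. -/
noncomputable def cesaro (N : ℕ) (w : ℝ) (x : ℝ) : ℂ :=
  ∑ n ∈ Finset.Icc (-(N : ℤ)) (N : ℤ),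
    ((((N : ℝ) + 1 - |(n : ℝ)|) / ((N : ℝ) + 1) : ℝ) : ℂ) * cc w n *
      Complex.exp (I * (n : ℂ) * (Real.pi : ℂ) * (x : ℂ))

open MeasureTheory
open scoped Real

section CesaroMean

variable {E : Type*} [NormedAddCommGroup E] [NormedSpace ℝ E]

/-- The `N`-th Cesàro mean of a bilateral series `∑ a n`, i.e. the average of its symmetric partial
sums `∑_{|n| ≤ k} a n` over `0 ≤ k ≤ N`, written with the weights this average gives to the
terms. -/
noncomputable def cesaroMean (a : ℤ → E) (N : ℕ) : E :=
  ∑ n ∈ Finset.Icc (-(N : ℤ)) N, (((N : ℝ) + 1 - |(n : ℝ)|) / ((N : ℝ) + 1)) • a n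

lemma cesaroMean_sub_sum (a : ℤ → E) (N : ℕ) :
    cesaroMean a N - ∑ n ∈ Finset.Icc (-(N : ℤ)) N, a n
      = -∑ n ∈ Finset.Icc (-(N : ℤ)) N, (|(n : ℝ)| / ((N : ℝ) + 1)) • a n := by
  rw [cesaroMean, ← Finset.sum_sub_distrib, ← Finset.sum_neg_distrib]
  refine Finset.sum_congr rfl fun n _ => ?_
  have hN : (N : ℝ) + 1 ≠ 0 := by positivity
  rw [sub_div, div_self hN, sub_smul, one_smul]
  abel

theorem norm_cesaroMean_sub_le {a : ℤ → E} {s : E} (hs : HasSum a s)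
    (ha : Summable fun n => ‖a n‖) (N : ℕ) :
    ‖cesaroMean a N - s‖
      ≤ ∑ n ∈ Finset.Icc (-(N : ℤ)) N, |(n : ℝ)| / ((N : ℝ) + 1) * ‖a n‖
        + ∑' n : {n // n ∉ Finset.Icc (-(N : ℤ)) N}, ‖a n‖ := by
  set F := Finset.Icc (-(N : ℤ)) N
  have htail : HasSum (fun n : {n // n ∉ F} => a n) (s - ∑ n ∈ F, a n) :=
    F.hasSum_compl_iff.mpr (by rwa [sub_add_cancel])
  calc ‖cesaroMean a N - s‖
      = ‖(cesaroMean a N - ∑ n ∈ F, a n) - (s - ∑ n ∈ F, a n)‖ := by rw [sub_sub_sub_cancel_right]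
    _ ≤ ‖cesaroMean a N - ∑ n ∈ F, a n‖ + ‖s - ∑ n ∈ F, a n‖ := norm_sub_le _ _
    _ ≤ ∑ n ∈ F, |(n : ℝ)| / ((N : ℝ) + 1) * ‖a n‖ + ∑' n : {n // n ∉ F}, ‖a n‖ := by
      gcongr
      · rw [cesaroMean_sub_sum, norm_neg]
        refine norm_sum_le_of_le _ fun n _ => ?_
        rw [norm_smul, Real.norm_of_nonneg (by positivity)]
      · rw [← htail.tsum_eq]
        exact norm_tsum_le_tsum_norm (ha.subtype _)

lemma sum_Icc_neg_of_even {G : Type*} [AddCommGroup G] {f : ℤ → G} (hf : f.Even) (N : ℕ) :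
    ∑ n ∈ Finset.Icc (-(N : ℤ)) N, f n = f 0 + 2 • ∑ n ∈ Finset.Icc 1 N, f n := by
  rw [Finset.sum_Icc_of_even_eq_range hf, Finset.range_eq_Ico,
    Finset.sum_eq_sum_Ico_succ_bot N.add_one_pos, Nat.cast_zero, zero_add,
    Finset.Ico_add_one_right_eq_Icc]
  abel

lemma tsum_compl_Icc_neg_of_even {G : Type*} [AddCommGroup G] [UniformSpace G]
    [IsUniformAddGroup G] [CompleteSpace G] [T2Space G] {f : ℤ → G} (hf : f.Even)
    (hs : Summable f) (N : ℕ) :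
    ∑' n : {n // n ∉ Finset.Icc (-(N : ℤ)) N}, f n = 2 • ∑' k : ℕ, f (N + 1 + k) := by
  have hpos : Summable fun k : ℕ => f (k + 1 : ℕ) :=
    hs.comp_injective (Nat.cast_injective.comp (add_left_injective 1))
  have hsplit : ∑' k : ℕ, f (k + 1 : ℕ)
      = ∑ n ∈ Finset.Icc 1 N, f n + ∑' k : ℕ, f (N + 1 + k) := by
    rw [← hpos.sum_add_tsum_nat_add N, Finset.range_eq_Ico,
      Finset.sum_Ico_add' (fun n : ℕ => f n) 0 N 1, zero_add, Finset.Ico_add_one_right_eq_Icc]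
    congr! 4 with k
    push_cast
    ring
  have htotal := hs.sum_add_tsum_compl (s := Finset.Icc (-(N : ℤ)) N)
  rw [sum_Icc_neg_of_even hf, tsum_int_eq_zero_add_two_mul_tsum_pnat hf hs,
    tsum_pnat_eq_tsum_succ (f := fun n : ℕ => f n), hsplit, smul_add, ← add_assoc] at htotal
  exact add_left_cancel htotal

theorem norm_cesaroMean_sub_le_of_even {a : ℤ → E} {s : E} (hs : HasSum a s)
    (ha : Summable fun n => ‖a n‖) (heven : Function.Even fun n => ‖a n‖) (N : ℕ) :
    ‖cesaroMean a N - s‖ ≤ 2 / ((N : ℝ) + 1) * ∑ n ∈ Finset.Icc 1 N, (n : ℝ) * ‖a n‖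
      + 2 * ∑' k : ℕ, ‖a (N + 1 + k)‖ := by
  refine (norm_cesaroMean_sub_le hs ha N).trans_eq ?_
  have hweighted : Function.Even fun n : ℤ => |(n : ℝ)| / ((N : ℝ) + 1) * ‖a n‖ := fun n => by
    simp only [Int.cast_neg, abs_neg, heven n]
  rw [sum_Icc_neg_of_even hweighted, tsum_compl_Icc_neg_of_even heven ha]
  simp only [Int.cast_zero, abs_zero, zero_div, zero_mul, zero_add, Int.cast_natCast, Nat.abs_cast,
    nsmul_eq_mul, Nat.cast_ofNat, Finset.mul_sum]
  congr! 2
  ring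

end CesaroMean

lemma integral_neg_self_eq_integral_add {E : Type*} [NormedAddCommGroup E] [NormedSpace ℝ E]
    {f : ℝ → E} {a : ℝ} (hf : IntervalIntegrable f volume 0 a)
    (hf_neg : IntervalIntegrable (fun x => f (-x)) volume 0 a) :
    ∫ x in -a..a, f x = ∫ x in 0..a, (f (-x) + f x) := by
  have hleft : IntervalIntegrable f volume (-a) 0 := by
    rw [IntervalIntegrable.iff_comp_neg, neg_neg, neg_zero]
    exact hf_neg.symm
  rw [← intervalIntegral.integral_add_adjacent_intervals hleft hf,
    intervalIntegral.integral_add hf_neg hf, intervalIntegral.integral_comp_neg, neg_zero]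

section NormFourier

variable {T : ℝ} [hT : Fact (0 < T)]

lemma norm_coe_addCircle_of_mem_Icc {x : ℝ} (hx : x ∈ Set.Icc 0 (T / 2)) :
    ‖(x : AddCircle T)‖ = x := by
  rw [(AddCircle.norm_coe_eq_abs_iff T hT.out.ne').mpr, abs_of_nonneg hx.1]
  rw [abs_of_nonneg hx.1, abs_of_pos hT.out]
  exact hx.2

theorem fourierCoeff_comp_norm {E : Type*} [NormedAddCommGroup E] [NormedSpace ℂ E]
    {g : ℝ → E} (hg : IntervalIntegrable g volume 0 (T / 2)) (n : ℤ) :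
    fourierCoeff (fun θ : AddCircle T => g ‖θ‖) n
      = (1 / T) • ∫ x in 0..T / 2,
          (fourier n (x : AddCircle T) + fourier (-n) (x : AddCircle T)) • g x := by
  have huIcc : Set.uIcc 0 (T / 2) = Set.Icc 0 (T / 2) := Set.uIcc_of_le (half_pos hT.out).le
  set h : ℝ → E := fun x => fourier (-n) (x : AddCircle T) • g ‖(x : AddCircle T)‖
  have hright : Set.EqOn h (fun x => fourier (-n) (x : AddCircle T) • g x)
      (Set.uIcc 0 (T / 2)) := fun x hx => by
    simp only [h, norm_coe_addCircle_of_mem_Icc (huIcc ▸ hx)]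
  have hleft : Set.EqOn (fun x => h (-x)) (fun x => fourier n (x : AddCircle T) • g x)
      (Set.uIcc 0 (T / 2)) := fun x hx => by
    simp only [h, AddCircle.coe_neg, norm_neg, norm_coe_addCircle_of_mem_Icc (huIcc ▸ hx),
      fourier_apply, neg_smul, smul_neg, neg_neg]
  have hint (m : ℤ) :
      IntervalIntegrable (fun x : ℝ => fourier m (x : AddCircle T) • g x) volume 0 (T / 2) :=
    hg.continuousOn_smul (by fun_prop)
  rw [fourierCoeff_eq_intervalIntegral _ n (-(T / 2)), show -(T / 2) + T = T / 2 by ring,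
    integral_neg_self_eq_integral_add
      ((hint (-n)).congr (hright.symm.mono Set.uIoc_subset_uIcc))
      ((hint n).congr (hleft.symm.mono Set.uIoc_subset_uIcc))]
  congr 1
  refine intervalIntegral.integral_congr fun x hx => ?_
  rw [add_smul]
  exact congrArg₂ (· + ·) (hleft hx) (hright hx)

end NormFourier

lemma neg_one_zpow_neg {α : Type*} [DivisionRing α] (n : ℤ) : (-1 : α) ^ (-n) = (-1) ^ n := by
  rw [zpow_neg, ← inv_zpow, inv_neg_one]

lemma cc_neg (w : ℝ) (n : ℤ) : cc w (-n) = cc w n := by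
  simp only [cc, neg_one_zpow_neg, Int.cast_neg, neg_mul, neg_sq]

lemma norm_neg_one_zpow_mul_exp_sub_one_le (w : ℝ) (n : ℤ) :
    ‖(-1 : ℂ) ^ n * exp (I * w) - 1‖ ≤ 2 := by
  refine (norm_sub_le _ _).trans ?_
  rw [norm_mul, norm_zpow, norm_exp_I_mul_ofReal]
  norm_num

lemma summable_norm_cc (w : ℝ) : Summable fun n : ℤ => ‖cc w n‖ := by
  have hfactor (n : ℤ) : (w : ℂ) ^ 2 - (n * π) ^ 2 = π ^ 2 * ((w / π - n) * (w / π + n)) := by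
    have hπ : (π : ℂ) ≠ 0 := ofReal_ne_zero.mpr Real.pi_ne_zero
    field_simp
    ring
  have hinv : Summable fun n : ℤ => ‖((w : ℂ) ^ 2 - (n * π) ^ 2)⁻¹‖ := by
    have h := EisensteinSeries.summable_linear_sub_mul_linear_add (w / π) 1 1
    simp only [Int.cast_one, one_mul] at h
    simp_rw [hfactor, mul_inv ((π : ℂ) ^ 2)]
    exact (h.mul_left _).norm
  refine (hinv.mul_left (|w| * 2)).of_nonneg_of_le (fun n => norm_nonneg _) fun n => ?_
  rw [cc, div_eq_mul_inv, norm_mul, norm_mul, norm_mul, norm_neg, norm_I, one_mul, norm_real,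
    Real.norm_eq_abs]
  gcongr
  exact norm_neg_one_zpow_mul_exp_sub_one_le w n

lemma integral_exp_I_mul_add_int_mul_pi {w : ℂ} {n : ℤ} (h : w + n * π ≠ 0) :
    ∫ x in (0 : ℝ)..1, exp (I * (w + n * π) * x)
      = ((-1) ^ n * exp (I * w) - 1) / (I * (w + n * π)) := by
  rw [integral_exp_mul_complex (mul_ne_zero I_ne_zero h), ofReal_one, ofReal_zero, mul_one,
    mul_zero, exp_zero, show I * (w + n * π) = n * (π * I) + I * w by ring, exp_add, exp_int_mul,
    exp_pi_mul_I]

lemma integral_exp_I_mul_sub_int_mul_pi {w : ℂ} {n : ℤ} (h : w - n * π ≠ 0) :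
    ∫ x in (0 : ℝ)..1, exp (I * (w - n * π) * x)
      = ((-1) ^ n * exp (I * w) - 1) / (I * (w - n * π)) := by
  have hneg : w - n * π = w + (-n : ℤ) * π := by push_cast; ring
  rw [hneg] at h ⊢
  rw [integral_exp_I_mul_add_int_mul_pi h, neg_one_zpow_neg]

/-- The function `θ ↦ e^{iw‖θ‖}` on `ℝ/2ℤ`. Since `‖x‖ = |x|` for `|x| ≤ 1`, this is the
`2`-periodic function of which, for `w ∉ πℤ`, the `cc w n` are the Fourier coefficients. -/
noncomputable def expNorm (w : ℝ) : C(AddCircle (2 : ℝ), ℂ) where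
  toFun θ := exp (I * w * ‖θ‖)
  continuous_toFun := by fun_prop

lemma expNorm_coe (w : ℝ) {x : ℝ} (hx : |x| ≤ 1) :
    expNorm w (x : AddCircle (2 : ℝ)) = exp (I * w * |x|) := by
  have hnorm : ‖(x : AddCircle (2 : ℝ))‖ = |x| :=
    (AddCircle.norm_coe_eq_abs_iff 2 two_ne_zero).mpr (by simpa using hx)
  exact congrArg (fun r : ℝ => exp (I * w * r)) hnorm

lemma fourier_coe_two (n : ℤ) (x : ℝ) :
    fourier n (x : AddCircle (2 : ℝ)) = exp (I * n * π * x) := by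
  rw [fourier_coe_apply]
  congr 1
  push_cast
  ring

local instance fact_zero_lt_two : Fact ((0 : ℝ) < 2) := ⟨two_pos⟩

section FourierExpansion

variable {w : ℝ} (hw : ∀ n : ℤ, w ≠ n * π)
include hw

lemma ofReal_add_int_mul_pi_ne_zero (n : ℤ) : (w : ℂ) + n * π ≠ 0 := by
  have h : w + n * π ≠ 0 := fun h => hw (-n) (by push_cast; linarith)
  exact_mod_cast h

theorem fourierCoeff_expNorm (n : ℤ) : fourierCoeff (expNorm w) n = cc w n := by
  have hplus := ofReal_add_int_mul_pi_ne_zero hw n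
  have hminus : (w : ℂ) - n * π ≠ 0 := by
    simpa [sub_eq_add_neg] using ofReal_add_int_mul_pi_ne_zero hw (-n)
  have hmodes (x : ℝ) :
      (fourier n (x : AddCircle (2 : ℝ)) + fourier (-n) (x : AddCircle (2 : ℝ))) • exp (I * w * x)
        = exp (I * (w + n * π) * x) + exp (I * (w - n * π) * x) := by
    rw [fourier_coe_two, fourier_coe_two, smul_eq_mul, add_mul, ← exp_add, ← exp_add, Int.cast_neg]
    congr 2 <;> ring
  have hexp (c : ℂ) : IntervalIntegrable (fun x : ℝ => exp (c * x)) volume 0 1 :=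
    Continuous.intervalIntegrable (by fun_prop) _ _
  calc fourierCoeff (expNorm w) n
      = (1 / 2 : ℝ) • ∫ x in (0 : ℝ)..1,
          (exp (I * (w + n * π) * x) + exp (I * (w - n * π) * x)) := by
        have h : fourierCoeff (expNorm w) n = _ :=
          fourierCoeff_comp_norm (T := 2) (g := fun x => exp (I * w * x))
            (Continuous.intervalIntegrable (by fun_prop) _ _) n
        simpa only [div_self (two_ne_zero (α := ℝ)), hmodes] using h
    _ = (1 / 2 : ℝ) • (((-1) ^ n * exp (I * w) - 1) / (I * (w + n * π))
          + ((-1) ^ n * exp (I * w) - 1) / (I * (w - n * π))) := by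
        rw [intervalIntegral.integral_add (hexp _) (hexp _),
          integral_exp_I_mul_add_int_mul_pi hplus, integral_exp_I_mul_sub_int_mul_pi hminus]
    _ = cc w n := by
        rw [cc, sq_sub_sq, real_smul]
        field_simp
        push_cast
        rw [I_sq]
        ring

theorem hasSum_cc_mul_exp {x : ℝ} (hx : |x| ≤ 1) :
    HasSum (fun n : ℤ => cc w n * exp (I * n * π * x)) (exp (I * w * |x|)) := by
  have hcoeff : fourierCoeff (expNorm w) = cc w := funext (fourierCoeff_expNorm hw)
  have hsummable : Summable (fourierCoeff (expNorm w)) := hcoeff ▸ (summable_norm_cc w).of_norm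
  have h := has_pointwise_sum_fourier_series_of_summable hsummable (x : AddCircle (2 : ℝ))
  simpa only [hcoeff, expNorm_coe w hx, fourier_coe_two, smul_eq_mul] using h

end FourierExpansion

lemma cesaro_eq_cesaroMean (N : ℕ) (w x : ℝ) :
    cesaro N w x = cesaroMean (fun n : ℤ => cc w n * exp (I * n * π * x)) N := by
  simp only [cesaro, cesaroMean, real_smul, mul_assoc]

lemma norm_cc_mul_exp (w x : ℝ) (n : ℤ) : ‖cc w n * exp (I * n * π * x)‖ = ‖cc w n‖ := by
  have h : I * n * π * x = I * (n * π * x : ℝ) := by push_cast; ring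
  rw [norm_mul, h, norm_exp_I_mul_ofReal, mul_one]

theorem cesaro_error_bound_general (w : ℝ) (hw : ∀ n : ℤ, w ≠ n * π) (N : ℕ) :
    ∀ x ∈ Set.Icc (0 : ℝ) 1,
      ‖cesaro N w x - exp (I * w * x)‖
        ≤ 2 / ((N : ℝ) + 1) * ∑ n ∈ Finset.Icc 1 N, (n : ℝ) * ‖cc w n‖
          + 2 * ∑' k : ℕ, ‖cc w (N + 1 + k)‖ := by
  intro x hx
  have hsum := hasSum_cc_mul_exp hw (abs_le.mpr ⟨by linarith [hx.1], hx.2⟩)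
  rw [abs_of_nonneg hx.1] at hsum
  have hsummable : Summable fun n : ℤ => ‖cc w n * exp (I * n * π * x)‖ := by
    simpa only [norm_cc_mul_exp] using summable_norm_cc w
  have heven : Function.Even fun n : ℤ => ‖cc w n * exp (I * n * π * x)‖ := fun n => by
    simp_rw [norm_cc_mul_exp, cc_neg]
  rw [cesaro_eq_cesaroMean]
  simpa only [norm_cc_mul_exp] using norm_cesaroMean_sub_le_of_even hsum hsummable heven N

lemma ne_int_mul_pi_of_abs_lt_pi {w : ℝ} (hw0 : w ≠ 0) (hw : |w| < π) (n : ℤ) : w ≠ n * π := by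
  rintro rfl
  rw [abs_mul, abs_of_pos Real.pi_pos, mul_lt_iff_lt_one_left Real.pi_pos] at hw
  have hn : n = 0 := Int.abs_lt_one_iff.mp (by exact_mod_cast hw)
  simp [hn] at hw0

/-- Error of the Cesàro mean on `[0,1]`:
`sup_{x∈[0,1]} |P_{N,w}(x) − e^{iwx}| ≤ (2/(N+1))·∑_{n=1}^{N} n|c_n(w)| + 2·∑_{n=N+1}^{∞} |c_n(w)|`. -/
theorem cesaro_error_bound (w : ℝ) (hw0 : 0 < |w|) (hw : |w| ≤ Real.pi / 2)
    (N : ℕ) (hN : 1 ≤ N) :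
    ∀ x ∈ Set.Icc (0:ℝ) 1,
      ‖cesaro N w x - Complex.exp (I * (w : ℂ) * (x : ℂ))‖
        ≤ (2 / ((N : ℝ) + 1)) * ∑ n ∈ Finset.Icc 1 N, (n : ℝ) * ‖cc w (n : ℤ)‖
            + 2 * ∑' k : ℕ, ‖cc w ((N : ℤ) + 1 + (k : ℤ))‖ :=
  cesaro_error_bound_general w
    (ne_int_mul_pi_of_abs_lt_pi (abs_pos.mp hw0) (hw.trans_lt (half_lt_self Real.pi_pos))) N
end
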